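/- arXiv:2305.10681 — 2 statements merged into one kernel-verified Lean document; each statement's English description precedes it below -/
import Mathlib

section
/- Let S be a measurable space (the state space), A a type (the action space), d : A × A → ℝ a nonnegative function with d(a, a) = 0 for all a ∈ A, π† : S → A a target policy, π : S → A a policy, and Δ ≥ 0 a real number. Let μ† and μ be probability measures on S (the state-visitation distributions of π† and π, respectively). Let R, R̂ : S × A → ℝ be reward functions satisfying |R̂(s, a) − R(s, a)| ≤ Δ · d(a, π†(s)) for all s ∈ S and a ∈ A. Assume s ↦ R(s, π†(s)) is μ†-integrable and that s ↦ R(s, π(s)) and s ↦ d(π(s), π†(s)) are μ-integrable. Then (∫ R̂(s, π†(s)) dμ†(s) − ∫ R̂(s, π(s)) dμ(s)) ≤ (∫ R(s, π†(s)) dμ†(s) − ∫ R(s, π(s)) dμ(s)) + Δ · ∫ d(π(s), π†(s)) dμ(s). -/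
/-!
Since `d` vanishes on the diagonal, the closeness hypothesis forces `Rhat` and `R` to coincide along
`πdag`, so the two target values are equal and only the values along `π` differ. There the pointwise
bound `R - Rhat ≤ Δ * d` integrates to the claim; the same bound, dominating `|Rhat - R|`, supplies
the integrability of `Rhat` along `π`.
-/

open MeasureTheory

/-- Policy-value gap inequality from the proof of Theorem 2: the adversarial gap
V^{π†}_{R̂} − V^π_{R̂} is bounded by the true gap plus Δ · E_{s∼μ}[d(π(s), π†(s))]. -/
theorem stmt_5
    {S : Type*} [MeasurableSpace S] {A : Type*}
    (d : A → A → ℝ) (hd : ∀ a b, 0 ≤ d a b) (hd0 : ∀ a, d a a = 0)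
    (πdag π : S → A) (Δ : ℝ) (hΔ : 0 ≤ Δ)
    (μdag μ : Measure S) [IsProbabilityMeasure μdag] [IsProbabilityMeasure μ]
    (R Rhat : S → A → ℝ)
    (hclose : ∀ s a, |Rhat s a - R s a| ≤ Δ * d a (πdag s))
    (hRdagint : Integrable (fun s => R s (πdag s)) μdag)
    (hRint : Integrable (fun s => R s (π s)) μ)
    (hdint : Integrable (fun s => d (π s) (πdag s)) μ)
    (hRhatmeas : Measurable fun s => Rhat s (π s)) :
    (∫ s, Rhat s (πdag s) ∂μdag) - ∫ s, Rhat s (π s) ∂μ ≤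
      ((∫ s, R s (πdag s) ∂μdag) - ∫ s, R s (π s) ∂μ)
        + Δ * ∫ s, d (π s) (πdag s) ∂μ := by
  -- On the target policy the two rewards agree, because `d` vanishes on the diagonal.
  have hdag : ∀ s, Rhat s (πdag s) = R s (πdag s) := fun s => by
    have h := hclose s (πdag s)
    rw [hd0, mul_zero] at h
    exact sub_eq_zero.mp (abs_nonpos_iff.mp h)
  have hdiff : Integrable (fun s => Rhat s (π s) - R s (π s)) μ :=
    (hdint.const_mul Δ).mono' (hRhatmeas.aestronglyMeasurable.sub hRint.aestronglyMeasurable)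
      (Filter.Eventually.of_forall fun s => hclose s (π s))
  -- Integrability of `Rhat` along `π` is what makes its Bochner integral the true expectation.
  have hRhatint : Integrable (fun s => Rhat s (π s)) μ := by
    simpa [Pi.add_def] using hdiff.add hRint
  have hmono : ∫ s, R s (π s) - Rhat s (π s) ∂μ ≤ ∫ s, Δ * d (π s) (πdag s) ∂μ :=
    integral_mono (hRint.sub hRhatint) (hdint.const_mul Δ) fun s => by
      have h := (abs_le.mp (hclose s (π s))).1
      show R s (π s) - Rhat s (π s) ≤ Δ * d (π s) (πdag s)
      linarith
  rw [integral_sub hRint hRhatint, integral_const_mul] at hmono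
  simp only [hdag]
  linarith
end

section
/- Let S be a measurable space (the state space), A a type (the action space), d : A × A → ℝ a nonnegative function with d(a, a) = 0 for all a ∈ A, π† : S → A a target policy, π : S → A a policy, and Δ ≥ 0 a real number. Let μ† and μ be probability measures on S (the state-visitation distributions of π† and π, respectively). Let R : S × A → ℝ be a reward function and define the adaptive adversarial reward R̂_ad(s, a) := R(s, a) − Δ · d(a, π†(s)). Assume s ↦ R(s, π†(s)) is μ†-integrable and that s ↦ R(s, π(s)) and s ↦ d(π(s), π†(s)) are μ-integrable. Then for every reward function R̂ : S × A → ℝ satisfying |R̂(s, a) − R(s, a)| ≤ Δ · d(a, π†(s)) for all s ∈ S, a ∈ A, one has (∫ R̂(s, π†(s)) dμ†(s) − ∫ R̂(s, π(s)) dμ(s)) ≤ (∫ R̂_ad(s, π†(s)) dμ†(s) − ∫ R̂_ad(s, π(s)) dμ(s)). -/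
/-!
Since `d a a = 0`, every admissible reward equals `R` along the target policy, so the value of
the target policy is the same for all of them. Along any other policy the adaptive reward
`R - Δ * d` is the pointwise smallest admissible one, hence gives that policy the least value.
-/

open MeasureTheory

/-- Theorem 2 (optimality of the adaptive target attack): among all adversarial rewards
R̂ with |R̂(s,a) − R(s,a)| ≤ Δ·d(a,π†(s)), the adaptive reward
R̂_ad(s,a) = R(s,a) − Δ·d(a,π†(s)) maximizes the policy-value gap V^{π†}_{R̂} − V^π_{R̂}
for every policy π. -/
theorem stmt_6
    {S : Type*} [MeasurableSpace S] {A : Type*}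
    (d : A → A → ℝ) (hd : ∀ a b, 0 ≤ d a b) (hd0 : ∀ a, d a a = 0)
    (πdag π : S → A) (Δ : ℝ) (hΔ : 0 ≤ Δ)
    (μdag μ : Measure S) [IsProbabilityMeasure μdag] [IsProbabilityMeasure μ]
    (R : S → A → ℝ)
    (RhatAd : S → A → ℝ) (hAd : ∀ s a, RhatAd s a = R s a - Δ * d a (πdag s))
    (hRdagint : Integrable (fun s => R s (πdag s)) μdag)
    (hRint : Integrable (fun s => R s (π s)) μ)
    (hdint : Integrable (fun s => d (π s) (πdag s)) μ) :
    ∀ Rhat : S → A → ℝ,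
      (∀ s a, |Rhat s a - R s a| ≤ Δ * d a (πdag s)) →
      (Measurable fun s => Rhat s (π s)) →
      (∫ s, Rhat s (πdag s) ∂μdag) - ∫ s, Rhat s (π s) ∂μ ≤
        (∫ s, RhatAd s (πdag s) ∂μdag) - ∫ s, RhatAd s (π s) ∂μ := by
  intro Rhat hR hmeas
  -- On target actions the budget `Δ * d` vanishes, so both rewards coincide with `R`.
  have hdag : ∀ s, Rhat s (πdag s) = RhatAd s (πdag s) := by
    intro s
    have h := abs_le.mp (hR s (πdag s))
    rw [hd0, mul_zero] at h
    rw [hAd, hd0, mul_zero]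
    linarith [h.1, h.2]
  have hAdint : Integrable (fun s => RhatAd s (π s)) μ := by
    simp only [hAd]
    exact hRint.sub (hdint.const_mul Δ)
  -- Integrability rules out the junk value `0` of the Bochner integral; it follows from
  -- `|Rhat| ≤ |R| + Δ * d`.
  have hRhatint : Integrable (fun s => Rhat s (π s)) μ := by
    refine (hRint.abs.add (hdint.const_mul Δ)).mono' hmeas.aestronglyMeasurable
      (Filter.Eventually.of_forall fun s => ?_)
    have h := abs_sub_abs_le_abs_sub (Rhat s (π s)) (R s (π s))
    simp only [Real.norm_eq_abs, Pi.add_apply]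
    linarith [hR s (π s)]
  have hle : ∫ s, RhatAd s (π s) ∂μ ≤ ∫ s, Rhat s (π s) ∂μ := by
    refine integral_mono hAdint hRhatint fun s => ?_
    have h := (abs_le.mp (hR s (π s))).1
    simp only [hAd]
    linarith
  simp only [hdag]
  linarith
end
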